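/- Let k ≥ 2 and let λ be a partition with k | |λ|, p := |λ|/k. If RHT_{kμ}^λ ≠ ∅ for some weak composition μ of p, then RHT_{(k^p)}^λ ≠ ∅, i.e., there is a rim hook tableau of shape λ all of whose rim hooks have length exactly k. -/

import Mathlib

open scoped BigOperators

namespace RimHookPaper

/-- A partition: a weakly decreasing, eventually-zero sequence of naturals;
`parts n` is the `(n+1)`-st part. -/
structure Partition : Type where
  parts : ℕ → ℕ
  antitone : ∀ ⦃i j : ℕ⦄, i ≤ j → parts j ≤ parts i
  eventually_zero : ∃ N : ℕ, ∀ i : ℕ, N ≤ i → parts i = 0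

namespace Partition

/-- The size `|λ|` of a partition. -/
noncomputable def size (P : Partition) : ℕ := ∑ᶠ i, P.parts i

/-- The empty partition. -/
def empty : Partition := ⟨fun _ => 0, fun _ _ _ => le_rfl, ⟨0, fun _ _ => rfl⟩⟩

/-- The number of nonzero parts of a partition. -/
noncomputable def length (P : Partition) : ℕ := sInf {N | P.parts N = 0}

/-- The cells of the Young diagram of a partition. -/
def cells (P : Partition) : Set (ℕ × ℕ) := {c | c.2 < P.parts c.1}

instance : LE Partition := ⟨fun Q P => ∀ i, Q.parts i ≤ P.parts i⟩

/-- The skew shape `P / Q` (as a set of cells). -/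
def skew (P Q : Partition) : Set (ℕ × ℕ) := P.cells \ Q.cells

end Partition

/-- Edge-adjacency of cells. -/
def Adj (c d : ℕ × ℕ) : Prop :=
  (c.1 = d.1 ∧ (c.2 + 1 = d.2 ∨ d.2 + 1 = c.2)) ∨
    (c.2 = d.2 ∧ (c.1 + 1 = d.1 ∨ d.1 + 1 = c.1))

/-- A set of cells is (edge-)connected. -/
def IsConnectedSet (S : Set (ℕ × ℕ)) : Prop :=
  ∀ c ∈ S, ∀ d ∈ S, Relation.ReflTransGen (fun x y => x ∈ S ∧ y ∈ S ∧ Adj x y) c d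

/-- `S` contains no 2×2 square. -/
def NoSquare (S : Set (ℕ × ℕ)) : Prop :=
  ¬ ∃ i j : ℕ, (i, j) ∈ S ∧ (i + 1, j) ∈ S ∧ (i, j + 1) ∈ S ∧ (i + 1, j + 1) ∈ S

/-- `P / Q` is a rim hook (border strip) of length `t`: a nonempty connected skew
shape with no 2×2 square, consisting of `t` boxes. -/
def IsRimHook (P Q : Partition) (t : ℕ) : Prop :=
  Q ≤ P ∧ (P.skew Q).Nonempty ∧ IsConnectedSet (P.skew Q) ∧ NoSquare (P.skew Q) ∧
    (P.skew Q).ncard = t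

/-- One step of a rim hook tableau: an empty hook (`t = 0`) or a rim hook of length `t`. -/
def IsStep (P Q : Partition) (t : ℕ) : Prop :=
  (t = 0 ∧ P = Q) ∨ (0 < t ∧ IsRimHook P Q t)

/-- Number of rows met by a set of cells. -/
noncomputable def rowCount (S : Set (ℕ × ℕ)) : ℕ := (Prod.fst '' S).ncard

/-- A rim hook tableau of shape `P` and type `μ`: a chain
`∅ = λ⁰ ⊆ λ¹ ⊆ ⋯ ⊆ λʳ = P` with each `λⁱ/λⁱ⁻¹` a (possibly empty)
rim hook of length `μᵢ`. -/
structure RHT (P : Partition) (μ : List ℕ) : Type where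
  chain : Fin (μ.length + 1) → Partition
  chain_zero : chain 0 = Partition.empty
  chain_last : chain (Fin.last μ.length) = P
  step : ∀ j : Fin μ.length, IsStep (chain j.succ) (chain j.castSucc) (μ.get j)

/-- The total height of a rim hook tableau: the sum of the heights
(number of rows minus one) of its nonempty rim hooks. -/
noncomputable def RHT.height {P : Partition} {μ : List ℕ} (T : RHT P μ) : ℕ :=
  ∑ j : Fin μ.length, (rowCount ((T.chain j.succ).skew (T.chain j.castSucc)) - 1)

/-- The character value `χ^λ_μ` of the symmetric group, via the
Murnaghan–Nakayama rule. -/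
noncomputable def chiAux (P : Partition) (μ : List ℕ) : ℤ :=
  ∑ᶠ T : RHT P μ, (-1 : ℤ) ^ T.height

/-- The parts of a multiset, listed in weakly decreasing order. -/
def typeList (μ : Multiset ℕ) : List ℕ := (μ.sort (· ≤ ·)).reverse

/-- `χ^λ_μ` for a multiset type `μ`. -/
noncomputable def chi (P : Partition) (μ : Multiset ℕ) : ℤ := chiAux P (typeList μ)

/-- `z_μ = ∏_j m_j! · j^{m_j}` where `μ` has `m_j` parts equal to `j`. -/
def zpart (μ : Multiset ℕ) : ℕ := μ.prod * ∏ j ∈ μ.toFinset, (μ.count j).factorial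

/-- `χ^λ(σ)`: the character evaluated at a permutation, via its full cycle type
(including fixed points as parts equal to 1). -/
noncomputable def chiPerm (P : Partition) {m : ℕ} (σ : Equiv.Perm (Fin m)) : ℤ :=
  chi P (σ.cycleType + Multiset.replicate (m - σ.cycleType.sum) 1)

/-- Position of the zero (up step) corresponding to row `n` in the 0/1 sequence
`s(P)`, where the median of `s(P)` is the gap just below position `0`. -/
def zpos (P : Partition) (n : ℕ) : ℤ := (P.parts n : ℤ) - (n : ℤ) - 1

/-- `s(P)` has a `0` (an up step) at position `x`; otherwise it has a `1`. -/
def isZeroAt (P : Partition) (x : ℤ) : Prop := ∃ n : ℕ, zpos P n = x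

/-- `Q` is the `k`-quotient of `P`: for each residue `i`, the 0/1 sequence of `Q i`
is (up to the shift `d` recording the position of its median) the subsequence of
`s(P)` consisting of every `k`-th digit, including the `(i+1)`-st digit after the
median of `s(P)`. -/
def IsKQuotient (k : ℕ) (P : Partition) (Q : Fin k → Partition) : Prop :=
  ∀ i : Fin k, ∃ d : ℤ, ∀ j : ℤ,
    isZeroAt (Q i) j ↔ isZeroAt P (((i : ℕ) : ℤ) + (j + d) * (k : ℤ))

/-- `C` is the `k`-core of `P`: it is obtained from `P` by successively removing
rim hooks of length `k`, as long as possible. -/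
def IsKCore (k : ℕ) (P C : Partition) : Prop :=
  Relation.ReflTransGen (fun A B => IsRimHook A B k) P C ∧ ¬ ∃ C', IsRimHook C C' k

/-- The map on row indices induced by moving the zero in row `m` down (left)
to row `m'`, the zeros in rows `m+1,…,m'` each moving up one row. -/
def cycleFun (m m' n : ℕ) : ℕ :=
  if n = m then m' else if m < n ∧ n ≤ m' then n - 1 else n

/-- One tracking step for the zero permutation: passing from `A` to `B` by removing
a rim hook, encoded on the 0/1 sequence as interchanging a `1` with a later `0`
(the moved zero, in row `m` of `A`, jumps over `m' - m` zeros, landing in row `m'`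
of `B`); the row of each labeled zero is updated by `cycleFun m m'`. -/
def StepTrack (A B : Partition) (f g : ℕ → ℕ) : Prop :=
  (A = B ∧ g = f) ∨
    ∃ m m' : ℕ, m ≤ m' ∧
      (∀ n, n < m → zpos B n = zpos A n) ∧
      (∀ n, m ≤ n → n < m' → zpos B n = zpos A (n + 1)) ∧
      (∀ n, m' < n → zpos B n = zpos A n) ∧
      g = fun i => cycleFun m m' (f i)

/-- `π` is the zero permutation of the rim hook tableau `T`: label the zeros of
`s(P)` succeeding the first one by `1,…,ℓ(P)` from left to right (`q j i` is the
row of label `i+1` at stage `j` of the peeling, rows counted from the top), peel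
the rim hooks of `T` in order of decreasing entries, and read off the labels in
the final sequence `s(∅)` from left to right. -/
def IsZeroPerm {P : Partition} {μ : List ℕ} (T : RHT P μ)
    (π : Equiv.Perm (Fin P.length)) : Prop :=
  ∃ q : Fin (μ.length + 1) → ℕ → ℕ,
    (∀ i : ℕ, i < P.length → q (Fin.last μ.length) i = P.length - 1 - i) ∧
    (∀ j : Fin μ.length,
      StepTrack (T.chain j.succ) (T.chain j.castSucc) (q j.succ) (q j.castSucc)) ∧
    (∀ i : Fin P.length, q 0 ((π i : ℕ)) = P.length - 1 - (i : ℕ))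

/-- `ω(T) = (T₁,…,T_k)`: the rim hook tableau `T` (all of whose hook lengths are
divisible by `k`) decomposes into the `k`-tuple of rim hook tableaux `Ti` on the
`k`-quotient: each step of `T`, removing a hook of length `k·t`, affects exactly
one subsequence (mod `k`) of the 0/1 sequence, i.e. removes a hook of length `t`
from exactly one of the quotient partitions. -/
def OmegaRel (k : ℕ) {P : Partition} {κ : List ℕ} (T : RHT P κ)
    {Q : Fin k → Partition} {ν : Fin k → List ℕ}
    (Ti : ∀ i : Fin k, RHT (Q i) (ν i)) : Prop :=
  ∃ (QC : Fin (κ.length + 1) → Fin k → Partition) (a : Fin κ.length → Fin k),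
    (∀ j, IsKQuotient k (T.chain j) (QC j)) ∧
    (∀ j : Fin κ.length, ∀ i, i ≠ a j → QC j.castSucc i = QC j.succ i) ∧
    (∀ j : Fin κ.length, ∃ t : ℕ, κ.get j = k * t ∧
      IsStep (QC j.succ (a j)) (QC j.castSucc (a j)) t) ∧
    (∀ i : Fin k, ∃ e : Fin (ν i).length → Fin κ.length,
      StrictMono e ∧ (∀ s, a (e s) = i) ∧ (∀ j, a j = i → ∃ s, e s = j) ∧
      (∀ s, k * (ν i).get s = κ.get (e s)) ∧
      (Ti i).chain 0 = QC 0 i ∧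
      (∀ s : Fin (ν i).length, (Ti i).chain s.succ = QC (Fin.succ (e s)) i))

/-- Row form of a rim hook. -/
def Mv (P Q : Partition) (n m m' : ℕ) : Prop :=
  0 < n ∧ m ≤ m' ∧ (∀ i, i < m → Q.parts i = P.parts i) ∧
    (∀ i, m ≤ i → i < m' → Q.parts i + 1 = P.parts (i + 1)) ∧
    (∀ i, m' < i → Q.parts i = P.parts i) ∧
    Q.parts m' + n + m = P.parts m + m'

theorem Partition.ext' {P Q : Partition} (h : ∀ i, P.parts i = Q.parts i) : P = Q := by
  cases P; cases Q
  have := funext h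
  simp only at this
  subst this
  rfl

theorem mem_skew (P Q : Partition) (a b : ℕ) :
    (a, b) ∈ P.skew Q ↔ b < P.parts a ∧ Q.parts a ≤ b := by
  simp [Partition.skew, Partition.cells]

theorem ncard_skew (P Q : Partition) (m m' : ℕ)
    (h : ∀ i, i < m ∨ m' < i → Q.parts i = P.parts i) :
    (P.skew Q).ncard = ∑ i ∈ Finset.Icc m m', (P.parts i - Q.parts i) := by
  have : P.skew Q = ↑(((Finset.Icc m m').sigma fun i => Finset.Ico (Q.parts i) (P.parts i)).map
      (Equiv.sigmaEquivProd ℕ ℕ).toEmbedding) := by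
    ext ⟨a, b⟩
    rw [mem_skew]
    simp only [Finset.coe_map, Set.mem_image, Finset.mem_coe, Finset.mem_sigma, Finset.mem_Icc,
      Finset.mem_Ico]
    constructor
    · rintro ⟨h1, h2⟩
      refine ⟨⟨a, b⟩, ⟨?_, h2, h1⟩, rfl⟩
      show m ≤ a ∧ a ≤ m'
      by_contra hc
      have := h a (by omega)
      omega
    · rintro ⟨⟨c, d⟩, ⟨h1, h2, h3⟩, h4⟩
      simp at h4
      obtain ⟨rfl, rfl⟩ := h4
      exact ⟨h3, h2⟩
  rw [this, Set.ncard_coe_finset]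
  simp

theorem telescope (f g : ℕ → ℕ) (m m' : ℕ) (hm : m ≤ m') (hle : ∀ i, g i ≤ f i)
    (h : ∀ i, m ≤ i → i < m' → g i + 1 = f (i + 1)) :
    g m' + (∑ i ∈ Finset.Icc m m', (f i - g i)) + m = f m + m' := by
  induction m', hm using Nat.le_induction with
  | base => simp; have := hle m; omega
  | succ b hb ih =>
    rw [Finset.sum_Icc_succ_top (by omega)]
    have h1 := ih (fun i h1 h2 => h i h1 (by omega))
    have h2 := h b hb (by omega)
    have h3 := hle (b + 1)
    omega

theorem crossing {S : Set (ℕ × ℕ)} {c d : ℕ × ℕ} (i : ℕ)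
    (h : Relation.ReflTransGen (fun x y => x ∈ S ∧ y ∈ S ∧ Adj x y) c d)
    (hc : c.1 ≤ i) (hd : i < d.1) : ∃ j, (i, j) ∈ S ∧ (i + 1, j) ∈ S := by
  induction h with
  | refl => omega
  | @tail b e hb he ih =>
    by_cases hbi : i < b.1
    · exact ih hbi
    · obtain ⟨h1, h2, h3⟩ := he
      obtain ⟨b1, b2⟩ := b
      obtain ⟨e1, e2⟩ := e
      simp only [Adj] at *
      have e1' : b1 = i := by omega
      have e2' : e1 = i + 1 := by omega
      have e3' : e2 = b2 := by omega
      subst e1' e2' e3'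
      exact ⟨_, h1, h2⟩

theorem mv_of_rimHook {P Q : Partition} {n : ℕ} (h : IsRimHook P Q n) :
    ∃ m m', Mv P Q n m m' := by
  classical
  obtain ⟨hle, ⟨⟨a, b⟩, hab⟩, hconn, hsq, hcard⟩ := h
  have hle' : ∀ i, Q.parts i ≤ P.parts i := hle
  rw [mem_skew] at hab
  obtain ⟨N, hN⟩ := P.eventually_zero
  have hex : ∃ i, Q.parts i < P.parts i := ⟨a, by omega⟩
  obtain ⟨m, hm, hmin⟩ : ∃ m, Q.parts m < P.parts m ∧ ∀ i, i < m → ¬ Q.parts i < P.parts i :=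
    ⟨Nat.find hex, Nat.find_spec hex, fun i hi => Nat.find_min hex hi⟩
  have hex2 : ∃ j, ∀ i, j < i → ¬ Q.parts i < P.parts i :=
    ⟨N, fun i hi => by have := hN i hi.le; omega⟩
  obtain ⟨m', hm', hmax⟩ : ∃ m', (∀ i, m' < i → ¬ Q.parts i < P.parts i) ∧
      ∀ j, j < m' → ¬ ∀ i, j < i → ¬ Q.parts i < P.parts i :=
    ⟨Nat.find hex2, Nat.find_spec hex2, fun i hi => Nat.find_min hex2 hi⟩
  have hmm : m ≤ m' := by
    by_contra hc
    exact hm' m (by omega) hm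
  have hmo : Q.parts m' < P.parts m' := by
    by_contra hc
    rcases Nat.eq_or_lt_of_le hmm with h1 | h1
    · subst h1; exact hc hm
    · refine hmax (m' - 1) (by omega) fun i hi => ?_
      rcases Nat.eq_or_lt_of_le (show m' ≤ i by omega) with h2 | h2
      · subst h2; exact hc
      · exact hm' i h2
  have hmid : ∀ i, m ≤ i → i < m' → Q.parts i + 1 = P.parts (i + 1) := by
    intro i h1 h2
    obtain ⟨j, hj1, hj2⟩ := crossing i
      (hconn (m, Q.parts m) ((mem_skew ..).2 ⟨hm, le_rfl⟩)
        (m', Q.parts m') ((mem_skew ..).2 ⟨hmo, le_rfl⟩)) h1 h2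
    rw [mem_skew] at hj1 hj2
    have hQ := Q.antitone (Nat.le_succ i)
    have hP := P.antitone (Nat.le_succ i)
    simp only [Nat.succ_eq_add_one] at hQ hP
    by_contra hc
    apply hsq
    refine ⟨i, Q.parts i, ?_, ?_, ?_, ?_⟩ <;> rw [mem_skew] <;> omega
  have hout : ∀ i, i < m ∨ m' < i → Q.parts i = P.parts i := by
    intro i hi
    have h1 := hle' i
    rcases hi with hi | hi
    · have := hmin i hi; omega
    · have := hm' i hi; omega
  have hc := ncard_skew P Q m m' hout
  have ht := telescope P.parts Q.parts m m' hmm hle' hmid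
  rw [← hc, hcard] at ht
  refine ⟨m, m', ?_, hmm, fun i hi => hout i (Or.inl hi), hmid, fun i hi => hout i (Or.inr hi), ht⟩
  · rw [← hcard, hc]
    have : P.parts m - Q.parts m ≤ ∑ i ∈ Finset.Icc m m', (P.parts i - Q.parts i) :=
      Finset.single_le_sum (f := fun i => P.parts i - Q.parts i) (fun _ _ => Nat.zero_le _)
        (Finset.mem_Icc.2 ⟨le_rfl, hmm⟩)
    omega

theorem adj_symm {c d : ℕ × ℕ} (h : Adj c d) : Adj d c := by
  unfold Adj at *; omega

theorem rimHook_of_mv {P Q : Partition} {n m m' : ℕ} (h : Mv P Q n m m') :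
    IsRimHook P Q n := by
  obtain ⟨hn, hmm, h1, h2, h3, h4⟩ := h
  have hlt : ∀ i, m ≤ i → i ≤ m' → Q.parts i < P.parts i := by
    intro i hi hi'
    rcases Nat.eq_or_lt_of_le hi' with h | h
    · subst h
      rcases Nat.eq_or_lt_of_le hi with h | h
      · subst h; omega
      · have := h2 (i - 1) (by omega) (by omega)
        have hh := Q.antitone (show i - 1 ≤ i by omega)
        rw [show i - 1 + 1 = i by omega] at this
        omega
    · have := h2 i hi h
      have := P.antitone (Nat.le_succ i)
      simp only [Nat.succ_eq_add_one] at this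
      omega
  have hout : ∀ i, i < m ∨ m' < i → Q.parts i = P.parts i := by
    rintro i (hi | hi)
    · exact h1 i hi
    · exact h3 i hi
  have hle : ∀ i, Q.parts i ≤ P.parts i := by
    intro i
    by_cases hi : i < m ∨ m' < i
    · exact (hout i hi).le
    · exact (hlt i (by omega) (by omega)).le
  have hin : ∀ a b, (a, b) ∈ P.skew Q → m ≤ a ∧ a ≤ m' := by
    intro a b hab
    rw [mem_skew] at hab
    by_contra hc
    have := hout a (by omega)
    omega
  refine ⟨hle, ⟨(m, Q.parts m), (mem_skew ..).2 ⟨hlt m le_rfl hmm, le_rfl⟩⟩, ?_, ?_, ?_⟩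
  · set R : ℕ × ℕ → ℕ × ℕ → Prop :=
      fun x y => x ∈ P.skew Q ∧ y ∈ P.skew Q ∧ Adj x y with hR
    have hsymm : Std.Symm R := ⟨fun x y h => ⟨h.2.1, h.1, adj_symm h.2.2⟩⟩
    have hrow : ∀ a d, Q.parts a + d < P.parts a →
        Relation.ReflTransGen R (a, Q.parts a) (a, Q.parts a + d) := by
      intro a d
      induction d with
      | zero => intro _; exact .refl
      | succ d ih =>
        intro hd
        refine (ih (by omega)).tail ⟨?_, ?_, ?_⟩
        · rw [mem_skew]; omega
        · rw [mem_skew]; omega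
        · simp [Adj]; omega
    have hrow' : ∀ a b, (a, b) ∈ P.skew Q → Relation.ReflTransGen R (a, Q.parts a) (a, b) := by
      intro a b hab
      rw [mem_skew] at hab
      have := hrow a (b - Q.parts a) (by omega)
      rwa [show Q.parts a + (b - Q.parts a) = b by omega] at this
    have hcol : ∀ d, m + d ≤ m' →
        Relation.ReflTransGen R (m + d, Q.parts (m + d)) (m, Q.parts m) := by
      intro d
      induction d with
      | zero => intro _; exact .refl
      | succ d ih =>
        intro hd
        have e := h2 (m + d) (by omega) (by omega)
        have hQ := Q.antitone (show m + d ≤ m + d + 1 by omega)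
        have hl := hlt (m + d) (by omega) (by omega)
        have hmem : (m + d + 1, Q.parts (m + d)) ∈ P.skew Q := by
          rw [mem_skew]; omega
        refine (hrow' _ _ hmem).trans (.head ⟨hmem, ?_, ?_⟩ (ih (by omega)))
        · rw [mem_skew]; omega
        · simp [Adj]
    have hall : ∀ a b, (a, b) ∈ P.skew Q → Relation.ReflTransGen R (m, Q.parts m) (a, b) := by
      intro a b hab
      have h5 := hin a b hab
      have := hcol (a - m) (by omega)
      rw [show m + (a - m) = a by omega] at this
      exact ((Relation.ReflTransGen.stdSymm (r := R)).symm _ _ this).trans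
        (hrow' a b hab)
    rintro ⟨a, b⟩ hab ⟨c, d⟩ hcd
    exact ((Relation.ReflTransGen.stdSymm (r := R)).symm _ _
      (hall a b hab)).trans (hall c d hcd)
  · rintro ⟨i, j, ha, hb, hc, hd⟩
    have h5 := hin _ _ ha
    have h6 := hin _ _ hd
    have := h2 i (by omega) (by omega)
    rw [mem_skew] at ha hd
    omega
  · have hc := ncard_skew P Q m m' hout
    have ht := telescope P.parts Q.parts m m' hmm hle h2
    omega

/-- Bead set. -/
def R (P : Partition) : Set ℤ := Set.range (zpos P)

theorem zpos_lt (P : Partition) {i j : ℕ} (h : i < j) : zpos P j < zpos P i := by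
  have := P.antitone h.le
  unfold zpos; omega

theorem zpos_inj (P : Partition) {i j : ℕ} (h : zpos P i = zpos P j) : i = j := by
  rcases lt_trichotomy i j with h1 | h1 | h1
  · have := zpos_lt P h1; omega
  · exact h1
  · have := zpos_lt P h1; omega

theorem eq_of_R {P Q : Partition} (h : R P = R Q) : P = Q := by
  have hs : ∀ P : Partition, StrictMono (fun i => - zpos P i) := fun P i j hij => by
    have := zpos_lt P hij
    simp only; omega
  have hr : ∀ P : Partition, Set.range (fun i => - zpos P i) = Neg.neg '' R P := fun P => by
    rw [R, ← Set.range_comp]; rfl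
  have := ((hs P).range_inj (hs Q)).1 (by rw [hr, hr, h])
  apply Partition.ext'
  intro i
  have := congrFun this i
  simp only [zpos] at this
  omega

/-- Bead move. -/
def Bead (P Q : Partition) (n : ℕ) (x : ℤ) : Prop :=
  x ∈ R P ∧ x - n ∉ R P ∧ ∀ y, y ∈ R Q ↔ (y ∈ R P ∧ y ≠ x) ∨ y = x - n

theorem bead_of_mv {P Q : Partition} {n m m' : ℕ} (h : Mv P Q n m m') :
    Bead P Q n (zpos P m) := by
  obtain ⟨hn, hmm, h1, h2, h3, h4⟩ := h
  have z1 : ∀ i, i < m → zpos Q i = zpos P i := fun i hi => by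
    have := h1 i hi; unfold zpos; omega
  have z3 : ∀ i, m' < i → zpos Q i = zpos P i := fun i hi => by
    have := h3 i hi; unfold zpos; omega
  have z2 : ∀ i, m ≤ i → i < m' → zpos Q i = zpos P (i + 1) := fun i hi hi' => by
    have := h2 i hi hi'; unfold zpos; push_cast; omega
  have z4 : zpos Q m' = zpos P m - n := by unfold zpos; omega
  have key : ∀ j, j ≠ m → ∃ i, i ≠ m' ∧ zpos Q i = zpos P j := by
    intro j hj
    rcases lt_or_ge j m with h | h
    · exact ⟨j, by omega, z1 j h⟩
    · rcases le_or_gt j m' with h' | h'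
      · refine ⟨j - 1, by omega, ?_⟩
        rw [z2 (j - 1) (by omega) (by omega), show j - 1 + 1 = j by omega]
      · exact ⟨j, by omega, z3 j h'⟩
  refine ⟨⟨m, rfl⟩, ?_, ?_⟩
  · rintro ⟨j, hj⟩
    by_cases hjm : j = m
    · subst hjm; omega
    · obtain ⟨i, hi, hi'⟩ := key j hjm
      exact hi (zpos_inj Q (by omega))
  · intro y
    constructor
    · rintro ⟨i, rfl⟩
      rcases lt_or_ge i m with h | h
      · left
        rw [z1 i h]
        exact ⟨⟨i, rfl⟩, fun he => by have := zpos_inj P he; omega⟩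
      · rcases lt_trichotomy i m' with h' | h' | h'
        · left
          rw [z2 i h h']
          exact ⟨⟨i + 1, rfl⟩, fun he => by have := zpos_inj P he; omega⟩
        · right; rw [h', z4]
        · left
          rw [z3 i h']
          exact ⟨⟨i, rfl⟩, fun he => by have := zpos_inj P he; omega⟩
    · rintro (⟨⟨j, rfl⟩, hj⟩ | rfl)
      · obtain ⟨i, -, hi⟩ := key j (fun h => hj (by rw [h]))
        exact ⟨i, hi⟩
      · exact ⟨m', z4⟩

theorem exists_mv (P : Partition) (n : ℕ) (hn : 0 < n) (x : ℤ) (hx : x ∈ R P)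
    (hx' : x - n ∉ R P) : ∃ Q, Bead P Q n x ∧ IsRimHook P Q n := by
  classical
  obtain ⟨m, rfl⟩ := hx
  have hex : ∃ j, zpos P j < zpos P m - n := by
    refine ⟨m + n + P.parts 0 + 1, ?_⟩
    have := P.antitone (Nat.zero_le (m + n + P.parts 0 + 1))
    unfold zpos; push_cast; omega
  obtain ⟨j, hj, hmin⟩ : ∃ j, zpos P j < zpos P m - n ∧ ∀ i, i < j → ¬ zpos P i < zpos P m - n :=
    ⟨Nat.find hex, Nat.find_spec hex, fun i hi => Nat.find_min hex hi⟩
  have hmj : m < j := by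
    by_contra hc
    rcases Nat.eq_or_lt_of_le (show j ≤ m by omega) with h | h
    · subst h; omega
    · have := zpos_lt P h; omega
  obtain ⟨m', rfl⟩ : ∃ m', j = m' + 1 := ⟨j - 1, by omega⟩
  have hgt : zpos P m - n < zpos P m' := by
    have := hmin m' (by omega)
    have h2 : zpos P m' ≠ zpos P m - n := fun h => hx' ⟨m', h⟩
    omega
  have hj2 := hj
  have hgt2 := hgt
  unfold zpos at hj2 hgt2
  push_cast at hj2
  have hpos : ∀ i, i ≤ m' → 1 ≤ P.parts i := fun i hi => by
    have := P.antitone hi; omega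
  let f : ℕ → ℕ := fun i => if i < m then P.parts i else if i < m' then P.parts (i + 1) - 1
    else if i = m' then P.parts m + m' - n - m else P.parts i
  have hf : Antitone f := by
    apply antitone_nat_of_succ_le
    intro i
    have a1 := P.antitone (show i ≤ i + 1 by omega)
    have a2 := P.antitone (show i + 1 ≤ i + 1 + 1 by omega)
    have a3 := fun h : i ≤ m' => hpos i h
    simp only [f]
    by_cases e1 : i = m'
    · subst e1
      split_ifs <;> omega
    · by_cases e2 : i + 1 = m'
      · subst e2
        by_cases e3 : i + 1 = m
        · subst e3
          split_ifs <;> omega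
        · split_ifs <;> omega
      · split_ifs <;> omega
  let Q : Partition := ⟨f, fun i j h => hf h, by
    obtain ⟨N, hN⟩ := P.eventually_zero
    refine ⟨N + m' + 1, fun i hi => ?_⟩
    have := hN i (by omega)
    simp only [f]
    split_ifs <;> omega⟩
  have hM : Mv P Q n m m' := by
    refine ⟨hn, by omega, ?_, ?_, ?_, ?_⟩
    · intro i hi; simp [Q, f, hi]
    · intro i hi hi'
      have := hpos (i + 1) (by omega)
      simp only [Q, f]
      split_ifs <;> omega
    · intro i hi
      simp only [Q, f]
      split_ifs <;> omega
    · simp only [Q, f]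
      split_ifs <;> omega
  exact ⟨Q, bead_of_mv hM, rimHook_of_mv hM⟩

theorem rimHook_of_bead {P Q : Partition} {n : ℕ} (hn : 0 < n) {x : ℤ} (h : Bead P Q n x) :
    IsRimHook P Q n := by
  obtain ⟨Q', hB, hR⟩ := exists_mv P n hn x h.1 h.2.1
  have : Q = Q' := eq_of_R (Set.ext fun y => by rw [h.2.2 y, hB.2.2 y])
  rwa [this]

/-- Reachable from the empty partition by `n` rim hooks of length `k`. -/
def Reach (k n : ℕ) (P : Partition) : Prop :=
  ∃ c : ℕ → Partition, c 0 = Partition.empty ∧ c n = P ∧ ∀ j, j < n → IsRimHook (c (j + 1)) (c j) k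

theorem Reach.step {k n : ℕ} {P Q : Partition} (h : Reach k n Q) (hr : IsRimHook P Q k) :
    Reach k (n + 1) P := by
  obtain ⟨c, h0, h1, h2⟩ := h
  refine ⟨fun j => if j ≤ n then c j else P, by simp [h0], by simp, fun j hj => ?_⟩
  rcases Nat.eq_or_lt_of_le (show j ≤ n by omega) with h | h
  · subst h; simpa [h1] using hr
  · have := h2 j h
    simpa [show j ≤ n by omega, show j + 1 ≤ n by omega] using this

theorem split_bead (k : ℕ) (hk : 0 < k) (t : ℕ) : ∀ (P Q : Partition) (x : ℤ) (n : ℕ),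
    Bead P Q (k * (t + 1)) x → Reach k n Q → Reach k (n + (t + 1)) P := by
  induction t with
  | zero =>
    intro P Q x n hB hr
    exact hr.step (rimHook_of_bead hk (by simpa using hB))
  | succ t ih =>
    intro P Q x n hB hr
    obtain ⟨b1, b2, b3⟩ := hB
    have hkk : (0 : ℤ) < k := by exact_mod_cast hk
    have hT : (0 : ℤ) < ((k * (t + 1) : ℕ) : ℤ) := by exact_mod_cast Nat.mul_pos hk (by omega)
    have e : ((k * (t + 1 + 1) : ℕ) : ℤ) = k + ((k * (t + 1) : ℕ) : ℤ) := by push_cast; ring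
    rw [e] at b2 b3
    set T : ℤ := ((k * (t + 1) : ℕ) : ℤ) with hTd
    by_cases hx : x - k ∈ R P
    · obtain ⟨P', hB', -⟩ := exists_mv P (k * (t + 1)) (Nat.mul_pos hk (by omega)) (x - k) hx
        (by rw [← hTd]; rwa [sub_sub])
      have hs : IsRimHook P' Q k := by
        apply rimHook_of_bead hk (x := x)
        have c3 := hB'.2.2
        rw [← hTd] at c3
        refine ⟨?_, ?_, ?_⟩
        · rw [c3]; left; exact ⟨b1, by omega⟩
        · rw [c3]; rintro (⟨-, h⟩ | h) <;> omega
        · intro y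
          rw [b3, c3]
          by_cases hy : y = x - k
          · subst hy
            have : x - (k : ℤ) ≠ x := by omega
            tauto
          · have : y = x - (k + T) ↔ y = x - k - T := by rw [sub_sub]
            rw [this]
            have : y = x - k - T → y ≠ x := by omega
            tauto
      have := ih P P' (x - k) (n + 1) hB' (hr.step hs)
      rwa [show n + 1 + (t + 1) = n + (t + 1 + 1) by omega] at this
    · obtain ⟨P', hB', hs⟩ := exists_mv P k hk x b1 hx
      have c3 := hB'.2.2
      have hB2 : Bead P' Q (k * (t + 1)) (x - k) := by
        unfold Bead
        rw [← hTd]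
        refine ⟨?_, ?_, ?_⟩
        · rw [c3]; right; rfl
        · rw [c3, sub_sub]; rintro (⟨h, -⟩ | h)
          · exact b2 h
          · omega
        · intro y
          rw [b3, c3, sub_sub]
          have : y = x - k → y ∉ R P := by rintro rfl; exact hx
          tauto
      exact (ih P' Q _ n hB2 hr).step hs

theorem Reach.toRHT {k n : ℕ} (hk : 0 < k) {P : Partition} (h : Reach k n P) :
    Nonempty (RHT P (List.replicate n k)) := by
  obtain ⟨c, h0, h1, h2⟩ := h
  refine ⟨⟨fun j => c j, by simpa using h0, by simpa using h1, fun j => Or.inr ?_⟩⟩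
  have hj : (j : ℕ) < n := by simpa using j.2
  simpa using ⟨hk, h2 j hj⟩

theorem reach_chain (k : ℕ) (hk : 0 < k) (P : Partition) (μ : List ℕ)
    (T : RHT P (μ.map fun x => k * x)) (j : ℕ) (hj : j < (μ.map fun x => k * x).length + 1) :
    Reach k ((μ.take j).sum) (T.chain ⟨j, hj⟩) := by
  induction j with
  | zero =>
    have := T.chain_zero
    exact ⟨fun _ => Partition.empty, rfl, this.symm, by simp⟩
  | succ j ih =>
    have hj' : j < μ.length := by simpa using hj
    have h1 := ih (by omega)
    have h2 := T.step ⟨j, by omega⟩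
    simp only [Fin.succ_mk, Fin.castSucc_mk, List.get_eq_getElem, List.getElem_map] at h2
    rw [List.sum_take_succ μ j hj']
    rcases h2 with ⟨h0, h3⟩ | ⟨h0, h3⟩
    · have : μ[j] = 0 := by
        rcases Nat.mul_eq_zero.1 h0 with h | h
        · omega
        · exact h
      rw [this, h3]
      exact h1
    · obtain ⟨t, ht⟩ : ∃ t, μ[j] = t + 1 :=
        ⟨μ[j] - 1, by have := Nat.pos_of_mul_pos_left h0; omega⟩
      rw [ht] at h3 ⊢
      obtain ⟨m, m', hM⟩ := mv_of_rimHook h3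
      exact split_bead k hk t _ _ _ _ (bead_of_mv hM) h1

/-- if `k ∣ |λ|`, `p = |λ|/k`, and `RHT_{kμ}^λ ≠ ∅` for some
weak composition `μ` of `p`, then also `RHT_{(k^p)}^λ ≠ ∅`. -/
theorem rht_type_k_pow_p_nonempty (k p : ℕ) (hk : 2 ≤ k) (P : Partition)
    (hp : P.size = k * p) (μ : List ℕ) (hμ : μ.sum = p)
    (h : Nonempty (RHT P (μ.map fun x => k * x))) :
    Nonempty (RHT P (List.replicate p k)) := by
  obtain ⟨T⟩ := h
  have hk' : 0 < k := by omega
  have h1 := reach_chain k hk' P μ T (μ.map fun x => k * x).length (by omega)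
  have h2 : T.chain ⟨(μ.map fun x => k * x).length, by omega⟩ = P := T.chain_last
  rw [h2] at h1
  simp only [List.length_map, List.take_length, hμ] at h1
  exact h1.toRHT hk'

end RimHookPaper
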